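/- Let z* be a strong τ-stationary point for some τ > 0 with ‖z*‖₀ = s. Then z* is a local minimizer of ℓ over S: there is δ > 0 such that ℓ(z) ≥ ℓ(z*) for all z ∈ S with ‖z − z*‖ < δ. If in addition ∇ℓ(z*) = 0, then z* is a global minimizer of ℓ over S. -/

import Mathlib

open scoped RealInnerProductSpace BigOperators
open Matrix

/-- The number of nonzero entries of a vector (the ℓ₀ "norm"). -/
noncomputable def norm0 {p : ℕ} (z : EuclideanSpace ℝ (Fin p)) : ℕ :=
  {i | z i ≠ 0}.ncard

/-- The Euclidean projection of `w` onto the sparse set `S = {x : ‖x‖₀ ≤ s}`: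
the set of points of `S` nearest to `w`. -/
noncomputable def projS {p : ℕ} (s : ℕ) (w : EuclideanSpace ℝ (Fin p)) :
    Set (EuclideanSpace ℝ (Fin p)) :=
  {x | norm0 x ≤ s ∧ ∀ x' : EuclideanSpace ℝ (Fin p), norm0 x' ≤ s → ‖w - x‖ ≤ ‖w - x'‖}

/-!
A differentiable convex function lies above its tangent at `x`, so it suffices that the linear term
`⟪gradient f x, z - x⟫` vanishes. If `x` is a projection of `x - τ • gradient f x` onto the sparse
set, moving `x` along a coordinate of its own support keeps it sparse, which forces the gradient to
vanish there. If moreover `x` has the full number `s` of nonzero entries, then every sparse `z` near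
`x` has the same support as `x`, so `z - x` is orthogonal to the gradient.
-/

open Filter Topology

section Convexity

lemma hasDerivAt_log_one_add_exp (t : ℝ) :
    HasDerivAt (fun t => Real.log (1 + Real.exp t)) (Real.sigmoid t) t := by
  have hpos : 0 < 1 + Real.exp t := by positivity
  convert ((Real.hasDerivAt_exp t).const_add 1).log hpos.ne' using 1
  rw [Real.sigmoid_def, Real.exp_neg]
  field_simp
  ring

lemma convexOn_log_one_add_exp :
    ConvexOn ℝ Set.univ (fun t : ℝ => Real.log (1 + Real.exp t)) := by
  refine Monotone.convexOn_univ_of_deriv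
    (fun t => (hasDerivAt_log_one_add_exp t).differentiableAt) ?_
  rw [funext fun t => (hasDerivAt_log_one_add_exp t).deriv]
  exact Real.sigmoid_monotone

lemma convexOn_finset_sum {ι E : Type*} [AddCommMonoid E] [SMul ℝ E] {t : Finset ι} {S : Set E}
    {f : ι → E → ℝ} (hS : Convex ℝ S) (hf : ∀ i ∈ t, ConvexOn ℝ S (f i)) :
    ConvexOn ℝ S fun z => ∑ i ∈ t, f i z := by
  simpa only [Finset.sum_fn] using Finset.sum_induction f (ConvexOn ℝ S)
    (fun _ _ => ConvexOn.add) (convexOn_const 0 hS) hf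

lemma apply_sub_le_sub_of_convexOn_of_hasFDerivWithinAt {E : Type*} [NormedAddCommGroup E]
    [NormedSpace ℝ E] {S : Set E} {f : E → ℝ} {f' : E →L[ℝ] ℝ} {x z : E}
    (hf : ConvexOn ℝ S f) (hf' : HasFDerivWithinAt f f' S x) (hx : x ∈ S) (hz : z ∈ S) :
    f' (z - x) ≤ f z - f x := by
  set γ : ℝ →ᵃ[ℝ] E := AffineMap.lineMap x z
  have hγ₀ : γ 0 = x := AffineMap.lineMap_apply_zero x z
  have hγ₁ : γ 1 = z := AffineMap.lineMap_apply_one x z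
  have hderiv : HasDerivWithinAt (f ∘ γ) (f' (z - x)) (γ ⁻¹' S) 0 :=
    (hγ₀.symm ▸ hf').comp_hasDerivWithinAt (0 : ℝ) AffineMap.hasDerivWithinAt_lineMap
      (Set.mapsTo_preimage γ S)
  simpa [slope_def_field, hγ₀, hγ₁] using
    (hf.comp_affineMap γ).le_slope_of_hasDerivWithinAt (x := 0) (y := 1)
      (by simpa [hγ₀] using hx) (by simpa [hγ₁] using hz) one_pos hderiv

lemma inner_gradient_sub_le_sub_of_convexOn {E : Type*} [NormedAddCommGroup E]
    [InnerProductSpace ℝ E] [CompleteSpace E] {S : Set E} {f : E → ℝ} {x z : E}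
    (hf : ConvexOn ℝ S f) (hd : DifferentiableAt ℝ f x) (hx : x ∈ S) (hz : z ∈ S) :
    ⟪gradient f x, z - x⟫ ≤ f z - f x := by
  simpa using apply_sub_le_sub_of_convexOn_of_hasFDerivWithinAt hf
    hd.hasGradientAt.hasFDerivAt.hasFDerivWithinAt hx hz

end Convexity

section LogisticLoss

variable {ι E : Type*} [Fintype ι] [NormedAddCommGroup E] [InnerProductSpace ℝ E]

/-- The logistic loss (average negative log-likelihood of logistic regression) at the parameter
`z`, for samples `x` with labels `y`. Samples live in an arbitrary inner product space, so that a
design matrix is encoded by the family of its rows. -/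
noncomputable def logisticLoss (x : ι → E) (y : ι → ℝ) (z : E) : ℝ :=
  (1 / (Fintype.card ι : ℝ)) * ∑ i, (Real.log (1 + Real.exp ⟪x i, z⟫) - y i * ⟪x i, z⟫)

lemma differentiable_logisticLoss (x : ι → E) (y : ι → ℝ) :
    Differentiable ℝ (logisticLoss x y) := by
  unfold logisticLoss
  have hinner (i : ι) : Differentiable ℝ fun z => ⟪x i, z⟫ := (innerSL ℝ (x i)).differentiable
  refine (Differentiable.fun_sum fun i _ => Differentiable.sub ?_ ?_).const_mul _
  · exact ((hinner i).exp.const_add 1).log fun z => by positivity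
  · exact (hinner i).const_mul (y i)

lemma convexOn_logisticLoss (x : ι → E) (y : ι → ℝ) :
    ConvexOn ℝ Set.univ (logisticLoss x y) := by
  have hterm (i : ι) : ConvexOn ℝ Set.univ
      fun z => Real.log (1 + Real.exp ⟪x i, z⟫) - y i * ⟪x i, z⟫ :=
    (convexOn_log_one_add_exp.comp_linearMap (innerₗ E (x i))).sub
      ((y i • innerₗ E (x i)).concaveOn convex_univ)
  exact (convexOn_finset_sum convex_univ fun i _ => hterm i).smul (by positivity)

end LogisticLoss

section Sparse

variable {p s : ℕ} {x : EuclideanSpace ℝ (Fin p)}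

lemma apply_eq_zero_of_mem_projS {g : EuclideanSpace ℝ (Fin p)}
    (hx : x ∈ projS s (x - g)) {i : Fin p} (hi : x i ≠ 0) : g i = 0 := by
  have hsparse : norm0 (x - EuclideanSpace.single i (g i)) ≤ s := by
    refine (Set.ncard_le_ncard (fun j hj => ?_) (Set.toFinite _)).trans hx.1
    obtain rfl | hji := eq_or_ne j i
    · exact hi
    · simpa [hji] using hj
  have hnorm : ‖g‖ ≤ ‖g - EuclideanSpace.single i (g i)‖ := by
    simpa [norm_sub_rev] using hx.2 _ hsparse
  have hpythagoras : ‖g - EuclideanSpace.single i (g i)‖ ^ 2 = ‖g‖ ^ 2 - g i ^ 2 := by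
    rw [norm_sub_sq_real, EuclideanSpace.inner_single_right, PiLp.norm_single,
      Real.norm_eq_abs, sq_abs, conj_trivial]
    ring
  have hsq : ‖g‖ ^ 2 ≤ ‖g‖ ^ 2 - g i ^ 2 := hpythagoras ▸ pow_le_pow_left₀ (norm_nonneg g) hnorm 2
  exact pow_eq_zero_iff two_ne_zero |>.1 (by linarith [sq_nonneg (g i)])

variable (x) in
lemma eventually_support_subset :
    ∀ᶠ z in 𝓝 x, {i | x i ≠ 0} ⊆ {i | z i ≠ 0} := by
  refine eventually_all.2 fun i => eventually_imp_distrib_left.2 fun hi => ?_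
  have hcont : ContinuousAt (fun z : EuclideanSpace ℝ (Fin p) => z i) x := by fun_prop
  exact hcont.eventually_ne hi

variable (x) in
lemma eventually_support_eq :
    ∀ᶠ z in 𝓝[{z | norm0 z ≤ norm0 x}] x, {i | x i ≠ 0} = {i | z i ≠ 0} := by
  refine eventually_nhdsWithin_iff.2 ((eventually_support_subset x).mono fun z hsub hz => ?_)
  exact Set.eq_of_subset_of_ncard_le hsub hz (Set.toFinite _)

lemma inner_sub_eq_zero_of_support_subset {z g : EuclideanSpace ℝ (Fin p)}
    (hsupp : {i | z i ≠ 0} ⊆ {i | x i ≠ 0}) (hg : ∀ i, x i ≠ 0 → g i = 0) :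
    ⟪g, z - x⟫ = 0 := by
  rw [PiLp.inner_apply]
  refine Finset.sum_eq_zero fun i _ => ?_
  by_cases hi : x i = 0
  · have hzi : z i = 0 := by_contra fun h => hsupp h hi
    simp [hi, hzi]
  · simp [hg i hi]

lemma isLocalMinOn_norm0_le_of_gradient_eq_zero_on_support {f : EuclideanSpace ℝ (Fin p) → ℝ}
    (hf : ConvexOn ℝ Set.univ f) (hd : DifferentiableAt ℝ f x)
    (hgrad : ∀ i, x i ≠ 0 → gradient f x i = 0) :
    IsLocalMinOn f {z | norm0 z ≤ norm0 x} x := by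
  filter_upwards [eventually_support_eq x] with z hsupp
  have htangent := inner_gradient_sub_le_sub_of_convexOn hf hd (Set.mem_univ x) (Set.mem_univ z)
  rwa [inner_sub_eq_zero_of_support_subset hsupp.superset hgrad, sub_nonneg] at htangent

theorem strong_stationary_full_support_local_minimizer_general
    {f : EuclideanSpace ℝ (Fin p) → ℝ} (hf : ConvexOn ℝ Set.univ f)
    (hd : DifferentiableAt ℝ f x) {τ : ℝ} (hτ : τ ≠ 0)
    (hstat : x ∈ projS s (x - τ • gradient f x)) (hcard : norm0 x = s) :
    (∃ δ > (0 : ℝ), ∀ z : EuclideanSpace ℝ (Fin p),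
        norm0 z ≤ s → ‖z - x‖ < δ → f x ≤ f z) ∧
    (gradient f x = 0 → ∀ z, f x ≤ f z) := by
  subst hcard
  constructor
  · have hgrad (i : Fin p) (hi : x i ≠ 0) : gradient f x i = 0 := by
      simpa [hτ] using apply_eq_zero_of_mem_projS hstat hi
    have hmin := isLocalMinOn_norm0_le_of_gradient_eq_zero_on_support hf hd hgrad
    obtain ⟨δ, hδ, hball⟩ := Metric.eventually_nhds_iff.1 (eventually_nhdsWithin_iff.1 hmin)
    exact ⟨δ, hδ, fun z hz hzx => hball (by rwa [dist_eq_norm]) hz⟩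
  · intro hgrad z
    simpa [hgrad] using
      inner_gradient_sub_le_sub_of_convexOn hf hd (Set.mem_univ x) (Set.mem_univ z)

end Sparse

/-- a strong τ-stationary point `z*` with `‖z*‖₀ = s` is a local
minimizer of ℓ over S; if moreover `∇ℓ(z*) = 0` it is a global minimizer. -/
theorem strong_stationary_full_support_local_minimizer (n p s : ℕ)
    (hn : 0 < n) (hs : 0 < s) (hsp : s < p)
    (X : Matrix (Fin n) (Fin p) ℝ) (y : Fin n → ℝ)
    (hy : ∀ i, y i = 0 ∨ y i = 1)
    (ℓ : EuclideanSpace ℝ (Fin p) → ℝ)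
    (hℓ : ∀ z, ℓ z = (1 / (n : ℝ)) *
      ∑ i, (Real.log (1 + Real.exp (∑ j, X i j * z j)) - y i * (∑ j, X i j * z j)))
    (τ : ℝ) (hτ : 0 < τ) (zs : EuclideanSpace ℝ (Fin p))
    (hstat : projS s (zs - τ • gradient ℓ zs) = {zs})
    (hcard : norm0 zs = s) :
    (∃ δ > (0 : ℝ), ∀ z : EuclideanSpace ℝ (Fin p),
        norm0 z ≤ s → ‖z - zs‖ < δ → ℓ zs ≤ ℓ z) ∧
    (gradient ℓ zs = 0 →
      ∀ z : EuclideanSpace ℝ (Fin p), norm0 z ≤ s → ℓ zs ≤ ℓ z) := by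
  obtain rfl : ℓ = logisticLoss (fun i => WithLp.toLp 2 (X i)) y := funext fun z => by
    simp [hℓ, logisticLoss, PiLp.inner_apply, mul_comm]
  exact (strong_stationary_full_support_local_minimizer_general (convexOn_logisticLoss _ y)
    (differentiable_logisticLoss _ y zs) hτ.ne' (hstat.symm.subset rfl) hcard).imp_right
    fun hglobal hgrad z _ => hglobal hgrad z
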